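/- Let 𝒞 and 𝒴 be finite nonempty sets, let W : 𝒞 × 𝒴 → ℝ, and let M be a real number with M > |𝒴| − 1. Assume that for every c ∈ 𝒞 there exists y_c ∈ 𝒴 such that (i) W(c, y_c) − W(c, y) ≥ log M for all y ≠ y_c, and (ii) |W(c, y') − W(c, y'')| ≤ log M for all y', y'' ≠ y_c. Define ω : Δ_𝒞 → Δ_𝒴 by ω(P) := softmax( y ↦ Σ_{c∈𝒞} W(c, y) · P(c) ). Then ω is extremal: for every λ ∈ (0,1) and all c₁ ≠ c₂ in 𝒞 with y_{c₁} ≠ y_{c₂}, one has max_{y∈𝒴} ω(λ δ_{c₁} + (1−λ) δ_{c₂})_y < max( max_{y∈𝒴} ω(δ_{c₁})_y, max_{y∈𝒴} ω(δ_{c₂})_y ). (Thus a log(M)-deterministic concept-bottleneck linear-softmax inference layer satisfies the extremality assumption.) -/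

import Mathlib

/-!
Let `a`, `b` be the weight rows of `c₁`, `c₂`, with top labels `y₁ ≠ y₂`, let `L = log M`, and let
`w = λ a + (1 - λ) b` be the weights of the mixture. Since `softmax w y = 1 / ∑ z, exp (w z - w y)`,
a softmax probability decreases when all the gaps `w z - w y` increase (`softmax_lt_of_gap`).

At `y₁` the gaps of `w` dominate those of `a`: for `z ≠ y₁, y₂` one has `b z - b y₁ ≥ -L` by (ii)
and `a z - a y₁ ≤ -L` by (i), so averaging in `b` can only increase the gap; for `z = y₂` it strictly
increases, since `b y₂ - b y₁ ≥ L > 0`. Hence `softmax w y₁ < softmax a y₁`, and symmetrically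
`softmax w y₂ < softmax b y₂` (`softmax_mix_lt`). Any third label has weight at most
`max (w y₁) (w y₂)`: if `λ ≥ 1/2`, the gain `λ L` at `y₁` from `a` outweighs the loss `(1 - λ) L`
from `b`, and otherwise the same holds at `y₂`.

The bound `M > |𝒴| - 1` enters only through `L > 0` when there are at least two labels.
-/

/-- A distribution on a finite set `S` is a nonnegative function summing to one. -/
def FinDist (S : Type*) [Fintype S] : Type _ :=
  {p : S → ℝ // (∀ s, 0 ≤ p s) ∧ ∑ s, p s = 1}

/-- The point-mass distribution `δ_s` at `s`. -/
def finDelta {S : Type*} [Fintype S] [DecidableEq S] (s : S) : FinDist S :=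
  ⟨fun t => if t = s then 1 else 0,
   fun t => by dsimp only; split <;> norm_num,
   by simp⟩

/-- The convex combination `λ • p + (1 − λ) • q` of two distributions. -/
def finMix {S : Type*} [Fintype S] (lam : ℝ) (h0 : 0 ≤ lam) (h1 : lam ≤ 1)
    (p q : FinDist S) : FinDist S :=
  ⟨fun s => lam * p.1 s + (1 - lam) * q.1 s,
   fun s => add_nonneg (mul_nonneg h0 (p.2.1 s)) (mul_nonneg (by linarith) (q.2.1 s)),
   by rw [Finset.sum_add_distrib, ← Finset.mul_sum, ← Finset.mul_sum, p.2.2, q.2.2]; ring⟩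

/-- The maximum of a real-valued function on a finite nonempty type. -/
noncomputable def maxVal {S : Type*} [Fintype S] [Nonempty S] (p : S → ℝ) : ℝ :=
  Finset.univ.sup' Finset.univ_nonempty p

/-- An inference layer `ω : Δ_𝒞 → Δ_𝒴` is extremal if for every `λ ∈ (0,1)` and
all `c ≠ c'` such that no `y` simultaneously maximizes `ω(δ_c)` and `ω(δ_{c'})`,
the max label probability of the mixture is strictly below the max of the two
extreme ones. -/
def Extremal {C : Type*} [Fintype C] [DecidableEq C]
    {Y : Type*} [Fintype Y] [Nonempty Y]
    (ω : FinDist C → FinDist Y) : Prop :=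
  ∀ (lam : ℝ) (h0 : 0 < lam) (h1 : lam < 1) (c c' : C), c ≠ c' →
    (¬ ∃ y, (ω (finDelta c)).1 y = maxVal (ω (finDelta c)).1 ∧
            (ω (finDelta c')).1 y = maxVal (ω (finDelta c')).1) →
    maxVal (ω (finMix lam h0.le h1.le (finDelta c) (finDelta c'))).1 <
      max (maxVal (ω (finDelta c)).1) (maxVal (ω (finDelta c')).1)

/-- The softmax distribution of a weight vector `w` on a finite nonempty set. -/
noncomputable def softmax {Y : Type*} [Fintype Y] (w : Y → ℝ) : Y → ℝ :=
  fun y => Real.exp (w y) / ∑ y', Real.exp (w y')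

theorem softmax_eq_inv {Y : Type*} [Fintype Y] (u : Y → ℝ) (y : Y) :
    softmax u y = (∑ z, Real.exp (u z - u y))⁻¹ := by
  simp only [softmax, Real.exp_sub, ← Finset.sum_div, inv_div]

/-- The softmax probability of `y` is strictly antitone in the family of gaps `u z - u y`. -/
theorem softmax_lt_of_gap {Y : Type*} [Fintype Y] (u v : Y → ℝ) (y : Y)
    (h : ∀ z, v z - v y ≤ u z - u y) (h' : ∃ z, v z - v y < u z - u y) :
    softmax u y < softmax v y := by
  rw [softmax_eq_inv, softmax_eq_inv]
  have hpos : 0 < ∑ z, Real.exp (v z - v y) :=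
    Finset.sum_pos (fun z _ => Real.exp_pos _) ⟨y, Finset.mem_univ y⟩
  apply inv_strictAnti₀ hpos
  obtain ⟨z, hz⟩ := h'
  exact Finset.sum_lt_sum (fun z _ => Real.exp_le_exp.mpr (h z))
    ⟨z, Finset.mem_univ z, Real.exp_lt_exp.mpr hz⟩

theorem softmax_mono {Y : Type*} [Fintype Y] (u : Y → ℝ) {y z : Y} (h : u y ≤ u z) :
    softmax u y ≤ softmax u z := by
  unfold softmax
  gcongr

theorem le_maxVal {S : Type*} [Fintype S] [Nonempty S] (p : S → ℝ) (s : S) : p s ≤ maxVal p :=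
  Finset.le_sup' p (Finset.mem_univ s)

/-- Mixing a row `a` with top label `y₁` with a row `b` with a different top label `y₂` strictly
lowers the softmax probability of `y₁`. -/
theorem softmax_mix_lt {Y : Type*} [Fintype Y] (a b : Y → ℝ) (L lam : ℝ) (hL : 0 < L)
    (h1 : lam < 1) (y₁ y₂ : Y) (hne : y₁ ≠ y₂)
    (ha : ∀ y, y ≠ y₁ → L ≤ a y₁ - a y) (hb : ∀ y, y ≠ y₂ → L ≤ b y₂ - b y)
    (hb' : ∀ y z, y ≠ y₂ → z ≠ y₂ → |b y - b z| ≤ L) :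
    softmax (fun y => lam * a y + (1 - lam) * b y) y₁ < softmax a y₁ := by
  have key₂ : a y₂ - a y₁ < lam * a y₂ + (1 - lam) * b y₂ - (lam * a y₁ + (1 - lam) * b y₁) := by
    have := ha y₂ hne.symm
    have := hb y₁ hne
    nlinarith
  refine softmax_lt_of_gap _ _ _ (fun z => ?_) ⟨y₂, key₂⟩
  by_cases hz1 : z = y₁
  · subst hz1; simp
  by_cases hz2 : z = y₂
  · subst hz2; exact key₂.le
  have := ha z hz1
  have := (abs_le.mp (hb' z y₁ hz2 hne)).1
  nlinarith

/-- The mixture bound at the level of weight rows: every label probability of the mixture is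
strictly below the larger of the two top probabilities of the rows. -/
theorem softmax_mix_lt_max {Y : Type*} [Fintype Y] (a b : Y → ℝ) (L lam : ℝ) (hL : 0 < L)
    (h0 : 0 < lam) (h1 : lam < 1) (y₁ y₂ : Y) (hne : y₁ ≠ y₂)
    (ha : ∀ y, y ≠ y₁ → L ≤ a y₁ - a y) (hb : ∀ y, y ≠ y₂ → L ≤ b y₂ - b y)
    (ha' : ∀ y z, y ≠ y₁ → z ≠ y₁ → |a y - a z| ≤ L)
    (hb' : ∀ y z, y ≠ y₂ → z ≠ y₂ → |b y - b z| ≤ L) (y : Y) :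
    softmax (fun y => lam * a y + (1 - lam) * b y) y < max (softmax a y₁) (softmax b y₂) := by
  have k1 := softmax_mix_lt a b L lam hL h1 y₁ y₂ hne ha hb hb'
  have k2 := softmax_mix_lt b a L (1 - lam) hL (by linarith) y₂ y₁ hne.symm hb ha ha'
  have hsw : (fun y => (1 - lam) * b y + (1 - (1 - lam)) * a y)
      = fun y => lam * a y + (1 - lam) * b y := by
    funext z; ring
  rw [hsw] at k2
  rw [lt_max_iff]
  by_cases hy1 : y = y₁
  · subst hy1; exact Or.inl k1
  by_cases hy2 : y = y₂
  · subst hy2; exact Or.inr k2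
  rcases le_total (1 / 2) lam with hl | hl
  · refine Or.inl ((softmax_mono _ ?_).trans_lt k1)
    have := ha y hy1
    have := (abs_le.mp (hb' y₁ y hne hy2)).1
    nlinarith
  · refine Or.inr ((softmax_mono _ ?_).trans_lt k2)
    have := hb y hy2
    have := (abs_le.mp (ha' y₂ y hne.symm hy1)).1
    nlinarith

/-- **log(M)-deterministic linear-softmax inference layers are extremal.**
Let `W : 𝒞 × 𝒴 → ℝ` with `M > |𝒴| − 1`, and suppose each `c` has a `yc c` such
that (i) `W(c, yc c) − W(c, y) ≥ log M` for `y ≠ yc c` and (ii)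
`|W(c, y') − W(c, y'')| ≤ log M` for `y', y'' ≠ yc c`.  Then the layer
`ω(P) = softmax (y ↦ Σ_c W(c,y) · P(c))` is extremal; in particular, for
`λ ∈ (0,1)` and `c₁ ≠ c₂` with `yc c₁ ≠ yc c₂`,
`max_y ω(λδ_{c₁} + (1−λ)δ_{c₂})_y < max (max_y ω(δ_{c₁})_y) (max_y ω(δ_{c₂})_y)`. -/
theorem logM_deterministic_CBNM_extremal
    {C : Type*} [Fintype C] [DecidableEq C] [Nonempty C]
    {Y : Type*} [Fintype Y] [Nonempty Y]
    (W : C × Y → ℝ) (M : ℝ) (hM : (Fintype.card Y : ℝ) - 1 < M)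
    (yc : C → Y)
    (hi : ∀ c y, y ≠ yc c → W (c, yc c) - W (c, y) ≥ Real.log M)
    (hii : ∀ c y' y'', y' ≠ yc c → y'' ≠ yc c →
      |W (c, y') - W (c, y'')| ≤ Real.log M)
    (ω : FinDist C → FinDist Y)
    (hωdef : ∀ (P : FinDist C) (y : Y),
      (ω P).1 y = softmax (fun y' => ∑ c, W (c, y') * P.1 c) y) :
    Extremal ω ∧
    ∀ (lam : ℝ) (h0 : 0 < lam) (h1 : lam < 1) (c₁ c₂ : C), c₁ ≠ c₂ →
      yc c₁ ≠ yc c₂ →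
      maxVal (ω (finMix lam h0.le h1.le (finDelta c₁) (finDelta c₂))).1 <
        max (maxVal (ω (finDelta c₁)).1) (maxVal (ω (finDelta c₂)).1) := by
  have hδ : ∀ c y, (ω (finDelta c)).1 y = softmax (fun y' => W (c, y')) y := by
    intro c y
    rw [hωdef]
    simp [finDelta]
  have hmix : ∀ (lam : ℝ) (h0 : 0 < lam) (h1 : lam < 1) (c₁ c₂ : C) (y : Y),
      (ω (finMix lam h0.le h1.le (finDelta c₁) (finDelta c₂))).1 y
        = softmax (fun y' => lam * W (c₁, y') + (1 - lam) * W (c₂, y')) y := by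
    intro lam h0 h1 c₁ c₂ y
    rw [hωdef]
    congr 1
    funext y'
    simp [finMix, finDelta, mul_comm, add_mul, Finset.sum_add_distrib]
  have hL : ∀ y y' : Y, y ≠ y' → 0 < Real.log M := by
    intro y y' hne
    apply Real.log_pos
    have hcard : 1 < Fintype.card Y := Fintype.one_lt_card_iff.mpr ⟨y, y', hne⟩
    have : (2 : ℝ) ≤ Fintype.card Y := by exact_mod_cast hcard
    linarith
  have main : ∀ (lam : ℝ) (h0 : 0 < lam) (h1 : lam < 1) (c₁ c₂ : C), c₁ ≠ c₂ →
      yc c₁ ≠ yc c₂ →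
      maxVal (ω (finMix lam h0.le h1.le (finDelta c₁) (finDelta c₂))).1 <
        max (maxVal (ω (finDelta c₁)).1) (maxVal (ω (finDelta c₂)).1) := by
    intro lam h0 h1 c₁ c₂ _ hne
    refine (Finset.sup'_lt_iff _).mpr fun y _ => ?_
    rw [hmix lam h0 h1]
    refine (softmax_mix_lt_max (fun y => W (c₁, y)) (fun y => W (c₂, y)) (Real.log M) lam
      (hL _ _ hne) h0 h1 (yc c₁) (yc c₂) hne (hi c₁) (hi c₂) (hii c₁) (hii c₂) y).trans_le ?_
    rw [← hδ, ← hδ]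
    exact max_le_max (le_maxVal _ _) (le_maxVal _ _)
  have hmax : ∀ c, (ω (finDelta c)).1 (yc c) = maxVal (ω (finDelta c)).1 := by
    intro c
    refine le_antisymm (le_maxVal _ _) (Finset.sup'_le _ _ fun y _ => ?_)
    rw [hδ, hδ]
    apply softmax_mono
    by_cases hy : y = yc c
    · rw [hy]
    · have := hi c y hy
      have := hL y (yc c) hy
      linarith
  refine ⟨fun lam h0 h1 c c' hcc hno => main lam h0 h1 c c' hcc fun heq => hno ?_, main⟩
  exact ⟨yc c, hmax c, by rw [heq]; exact hmax c'⟩
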